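/- arXiv:math-ph/0503023 — 2 statements merged into one kernel-verified Lean document; each statement's English description precedes it below -/
import Mathlib

section
/- Theorem 2 (surface-order bound for the periodic–free pressure difference): fix d ≥ 1, x > 0 and L ∈ ℕ, L ≥ 2. Let P_{Π_L} be the quenched pressure of the d-dimensional discrete torus of side L (all nearest-neighbor bonds with periodic identification, all parameters equal to x) and P_{Λ_L} the quenched pressure of the cube of side L with free boundary conditions. Then (x²/2) d L^{d−1} ≤ P_{Π_L} − P_{Λ_L} ≤ x² d L^{d−1}; in particular the difference is positive and of the order of the surface L^{d−1}. -/
open MeasureTheory ProbabilityTheory Filter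

noncomputable section

/-- The real value ±1 of a Boolean spin. -/
def spin (s : Bool) : ℝ := if s then 1 else -1

/-- The quenched pressure `[ln Z]` on the Nishimori line of the Gaussian Edwards–Anderson
model with site set `V`, bond set `E` (a finite set of ordered pairs of sites), and all
parameters equal to `x`: the couplings `j_e`, `e ∈ E`, are independent Gaussians of mean `x`
and variance 1, and `Z(j) = Σ_S exp (Σ_{e∈E} x j_e S_{e.1} S_{e.2})`. -/
def EApressure {V : Type*} [Fintype V] [DecidableEq V] (E : Finset (V × V)) (x : ℝ) : ℝ :=
  ∫ j : {e // e ∈ E} → ℝ,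
    Real.log (∑ S : V → Bool,
      Real.exp (∑ e : {e // e ∈ E},
        x * j e * (spin (S (e : V × V).1) * spin (S (e : V × V).2))))
    ∂(Measure.pi fun _ : {e // e ∈ E} => gaussianReal x 1)

/-- The nearest-neighbor bonds of the cube `Λ_L = {0, …, L−1}^d` with free boundary
conditions: pairs `(n, n')` with `n' = n + eᵢ` for some direction `i` (no wrap-around). -/
def cubeBonds (d L : ℕ) : Finset ((Fin d → Fin L) × (Fin d → Fin L)) :=
  Finset.univ.filter fun p => ∃ i : Fin d,
    (∀ k, k ≠ i → p.2 k = p.1 k) ∧ ((p.2 i : ℕ) = (p.1 i : ℕ) + 1)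

/-- The nearest-neighbor bonds of the discrete torus `Π_L = (ℤ/Lℤ)^d`: pairs `(n, n')`
with `n' = n + eᵢ` modulo `L` in some direction `i`. -/
def torusBonds (d L : ℕ) : Finset ((Fin d → Fin L) × (Fin d → Fin L)) :=
  Finset.univ.filter fun p => ∃ i : Fin d,
    (∀ k, k ≠ i → p.2 k = p.1 k) ∧ ((p.2 i : ℕ) = ((p.1 i : ℕ) + 1) % L)

/-- Product of Gaussians with means `a e` and variance one. -/
def gpi {ι : Type*} [Fintype ι] (a : ι → ℝ) : Measure (ι → ℝ) :=
  Measure.pi fun e => gaussianReal (a e) 1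

instance {ι : Type*} [Fintype ι] (a : ι → ℝ) : IsProbabilityMeasure (gpi a) := by
  unfold gpi; infer_instance

lemma pi_withDensity_aux {ι : Type*} [Fintype ι] (μ : ι → Measure ℝ)
    [∀ i, IsProbabilityMeasure (μ i)] (f : ι → ℝ → ENNReal) (hf : ∀ i, Measurable (f i))
    [∀ i, SigmaFinite ((μ i).withDensity (f i))] :
    Measure.pi (fun i => (μ i).withDensity (f i)) =
      (Measure.pi μ).withDensity (fun j => ∏ i, f i (j i)) := by
  classical
  refine Measure.pi_eq fun s hs => ?_
  rw [withDensity_apply _ (MeasurableSet.univ_pi hs),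
    ← lintegral_indicator (MeasurableSet.univ_pi hs)]
  have h1 : (Set.univ.pi s).indicator (fun j : ι → ℝ => ∏ i, f i (j i)) =
      fun j => ∏ i, (s i).indicator (f i) (j i) := by
    funext j
    by_cases hj : j ∈ Set.univ.pi s
    · rw [Set.indicator_of_mem hj]
      refine Finset.prod_congr rfl fun i _ => ?_
      rw [Set.indicator_of_mem (hj i trivial)]
    · rw [Set.indicator_of_notMem hj]
      simp only [Set.mem_univ_pi, not_forall] at hj
      obtain ⟨i, hi⟩ := hj
      symm
      refine Finset.prod_eq_zero (Finset.mem_univ i) ?_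
      rw [Set.indicator_of_notMem hi]
  rw [h1]
  have hind := iIndepFun_pi (μ := μ) (X := fun i => (s i).indicator (f i))
    (fun i => ((hf i).indicator (hs i)).aemeasurable)
  have := lintegral_prod_eq_prod_lintegral_of_indepFun Finset.univ _ hind
    (fun i => ((hf i).indicator (hs i)).comp (measurable_pi_apply i))
  refine Eq.trans this ?_
  refine Finset.prod_congr rfl fun i _ => ?_
  rw [withDensity_apply _ (hs i), ← lintegral_indicator (hs i)]
  exact (measurePreserving_eval μ i).lintegral_comp ((hf i).indicator (hs i))

lemma gaussianReal_eq_density (a : ℝ) :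
    gaussianReal a 1 = (gaussianReal 0 1).withDensity
      (fun t => ENNReal.ofReal (Real.exp (a * t - a ^ 2 / 2))) := by
  rw [gaussianReal_of_var_ne_zero a one_ne_zero, gaussianReal_of_var_ne_zero 0 one_ne_zero,
    ← withDensity_mul _ (measurable_gaussianPDF 0 1) (by fun_prop)]
  congr 1
  funext t
  simp only [Pi.mul_apply, gaussianPDF, gaussianPDFReal]
  rw [← ENNReal.ofReal_mul (by positivity), mul_assoc _ (Real.exp _) (Real.exp _), ← Real.exp_add]
  congr 3
  simp
  ring

lemma gpi_density {ι : Type*} [Fintype ι] (a : ι → ℝ) (f : (ι → ℝ) → ENNReal) :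
    ∫⁻ j, f j ∂(gpi a) =
      ∫⁻ j, ENNReal.ofReal (Real.exp (∑ e, (a e * j e - a e ^ 2 / 2))) * f j
        ∂(gpi (fun _ : ι => 0)) := by
  have h : gpi a = (gpi (fun _ : ι => 0)).withDensity
      (fun j => ENNReal.ofReal (Real.exp (∑ e, (a e * j e - a e ^ 2 / 2)))) := by
    unfold gpi
    have h1 : (fun e => gaussianReal (a e) 1) = fun e => (gaussianReal 0 1).withDensity
      (fun t => ENNReal.ofReal (Real.exp (a e * t - a e ^ 2 / 2))) := by
      funext e; exact gaussianReal_eq_density _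
    have : ∀ e, SigmaFinite ((gaussianReal 0 1).withDensity
      (fun t => ENNReal.ofReal (Real.exp (a e * t - a e ^ 2 / 2)))) := by
      intro e; rw [← gaussianReal_eq_density]; infer_instance
    rw [h1, pi_withDensity_aux (fun _ => gaussianReal 0 1)
      (fun e t => ENNReal.ofReal (Real.exp (a e * t - a e ^ 2 / 2))) (fun e => by fun_prop)]
    congr 1
    funext j
    rw [Real.exp_sum, ENNReal.ofReal_prod_of_nonneg (fun _ _ => (Real.exp_pos _).le)]
  rw [h, lintegral_withDensity_eq_lintegral_mul_non_measurable]
  · rfl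
  · fun_prop
  · exact ae_of_all _ fun _ => ENNReal.ofReal_lt_top

lemma gpi_precomp {ι κ : Type*} [Fintype ι] [Fintype κ] (g : κ → ι)
    (hg : Function.Injective g) (a : ι → ℝ) :
    MeasurePreserving (fun (j : ι → ℝ) (k : κ) => j (g k)) (gpi a) (gpi (a ∘ g)) := by
  refine ⟨by fun_prop, ?_⟩
  have h := (iIndepFun_pi (μ := fun e => gaussianReal (a e) 1) (X := fun _ t => t)
    (fun i => by fun_prop)).precomp hg
  have h2 := (iIndepFun_iff_map_fun_eq_pi_map
    (fun i => (measurable_pi_apply (g i)).aemeasurable)).1 h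
  unfold gpi
  refine Eq.trans h2 ?_
  congr 1
  funext k
  exact (measurePreserving_eval (fun e => gaussianReal (a e) 1) (g k)).map_eq

lemma gpi_flip {ι : Type*} [Fintype ι] (s a : ι → ℝ) (hs : ∀ e, s e ^ 2 = 1) :
    MeasurePreserving (fun (j : ι → ℝ) e => s e * j e) (gpi a) (gpi (fun e => s e * a e)) := by
  unfold gpi
  refine measurePreserving_pi (fun e => gaussianReal (a e) 1)
    (fun e => gaussianReal (s e * a e) 1) (f := fun e t => s e * t) fun e => ⟨by fun_prop, ?_⟩
  rw [gaussianReal_map_const_mul]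
  congr 1
  ext
  simp [hs e]

lemma gpi_trunc {ι : Type*} [Fintype ι] [DecidableEq ι] (A : Finset ι) (a b : ι → ℝ)
    (hab : ∀ e ∈ A, a e = b e) (f : (ι → ℝ) → ENNReal) (hf : Measurable f)
    (hfA : ∀ j, f (fun e => if e ∈ A then j e else 0) = f j) :
    ∫⁻ j, f j ∂(gpi a) = ∫⁻ j, f j ∂(gpi b) := by
  have key : ∀ c : ι → ℝ, ∃ ν : ι → Measure ℝ,
      ν = (fun e => if e ∈ A then gaussianReal (c e) 1 else Measure.dirac 0) ∧
      ∫⁻ j, f j ∂(gpi c) = ∫⁻ j, f j ∂(Measure.pi ν) := by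
    intro c
    refine ⟨_, rfl, ?_⟩
    set ν : ι → Measure ℝ :=
      fun e => if e ∈ A then gaussianReal (c e) 1 else Measure.dirac 0 with hν
    have : ∀ e, SigmaFinite (ν e) := by
      intro e
      simp only [hν]
      split_ifs <;> infer_instance
    have mp := measurePreserving_pi (fun e => gaussianReal (c e) 1) ν
      (f := fun e t => if e ∈ A then t else 0) (fun e => by
        by_cases he : e ∈ A
        · simp only [hν, he, if_true]
          exact MeasurePreserving.id _
        · simp only [hν, he, if_false]
          exact ⟨by fun_prop, by simp [Measure.map_const]⟩)
    rw [← mp.lintegral_comp hf]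
    unfold gpi
    refine lintegral_congr fun j => (hfA j).symm
  obtain ⟨ν, h1, h2⟩ := key a
  obtain ⟨ν', h1', h2'⟩ := key b
  rw [h2, h2', h1, h1']
  congr 3
  funext e
  split_ifs with he
  · rw [hab e he]
  · rfl

section model

set_option linter.unusedSectionVars false

variable {V ι : Type*} [Fintype V] [DecidableEq V] [Fintype ι] [DecidableEq ι]

def sg (p : ι → V × V) (S : V → Bool) (e : ι) : ℝ := spin (S (p e).1) * spin (S (p e).2)

def bw (p : ι → V × V) (x : ℝ) (A : Finset ι) (S : V → Bool) (j : ι → ℝ) : ℝ :=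
  Real.exp (∑ e ∈ A, x * j e * sg p S e)

def ZA (p : ι → V × V) (x : ℝ) (A : Finset ι) (j : ι → ℝ) : ℝ :=
  ∑ S : V → Bool, bw p x A S j

lemma sg_sq (p : ι → V × V) (S : V → Bool) (e : ι) : sg p S e ^ 2 = 1 := by
  unfold sg spin; split_ifs <;> norm_num

lemma sg_xor (p : ι → V × V) (S T : V → Bool) (e : ι) :
    sg p (fun v => xor (S v) (T v)) e = sg p S e * sg p T e := by
  unfold sg
  have : ∀ a b : Bool, spin (xor a b) = - (spin a * spin b) := by
    intro a b; cases a <;> cases b <;> simp [spin]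
  simp only [this]; ring

lemma bw_pos (p : ι → V × V) (x : ℝ) (A : Finset ι) (S : V → Bool) (j : ι → ℝ) :
    0 < bw p x A S j := Real.exp_pos _

lemma ZA_pos (p : ι → V × V) (x : ℝ) (A : Finset ι) (j : ι → ℝ) : 0 < ZA p x A j :=
  Finset.sum_pos (fun S _ => bw_pos p x A S j) Finset.univ_nonempty

lemma bw_meas (p : ι → V × V) (x : ℝ) (A : Finset ι) (S : V → Bool) :
    Measurable (bw p x A S) := by
  unfold bw; fun_prop

lemma ZA_meas (p : ι → V × V) (x : ℝ) (A : Finset ι) : Measurable (ZA p x A) := by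
  unfold ZA
  have := bw_meas p x A
  fun_prop

lemma ZA_flip (p : ι → V × V) (x : ℝ) (A : Finset ι) (T : V → Bool) (j : ι → ℝ) :
    ZA p x A (fun e => sg p T e * j e) = ZA p x A j := by
  unfold ZA
  have hinv : Function.Involutive (fun (S : V → Bool) v => xor (S v) (T v)) := by
    intro S; funext v; simp
  refine (Equiv.sum_comp hinv.toPerm _).symm.trans ?_
  refine Finset.sum_congr rfl fun S _ => ?_
  unfold bw
  congr 1
  refine Finset.sum_congr rfl fun e _ => ?_
  change x * (sg p T e * j e) * sg p (fun v => xor (S v) (T v)) e = _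
  rw [sg_xor]
  linear_combination (x * j e * sg p S e) * sg_sq p T e

lemma integral_le_of_ratio {Ω : Type*} [MeasurableSpace Ω] (μ : Measure Ω)
    [IsProbabilityMeasure μ] (g R : Ω → ℝ) (hR : Measurable R) (hR0 : ∀ w, 0 ≤ R w)
    (hR1 : ∫⁻ w, ENNReal.ofReal (R w) ∂μ ≤ 1) (hg : Integrable g μ)
    (hgR : ∀ w, g w ≤ R w - 1) : ∫ w, g w ∂μ ≤ 0 := by
  have hRi : Integrable R μ :=
    (lintegral_ofReal_ne_top_iff_integrable hR.aestronglyMeasurable (ae_of_all _ hR0)).1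
      (ne_top_of_le_ne_top ENNReal.one_ne_top hR1)
  have h1 : ∫ w, R w ∂μ ≤ 1 := by
    rw [integral_eq_lintegral_of_nonneg_ae (ae_of_all _ hR0) hR.aestronglyMeasurable]
    exact ENNReal.toReal_le_of_le_ofReal zero_le_one (by simpa using hR1)
  have h2 : ∫ w, g w ∂μ ≤ ∫ w, (R w - 1) ∂μ :=
    integral_mono hg (hRi.sub (integrable_const 1)) hgR
  have h3 : ∫ w, (R w - 1) ∂μ = ∫ w, R w ∂μ - 1 := by
    rw [integral_sub hRi (integrable_const 1)]; simp
  linarith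

lemma gpi_eval_integrable (a : ι → ℝ) (e : ι) : Integrable (fun j => j e) (gpi a) := by
  have : Integrable (fun t : ℝ => t) (gaussianReal (a e) 1) :=
    memLp_one_iff_integrable.1 (memLp_id_gaussianReal' 1 ENNReal.one_ne_top)
  exact (measurePreserving_eval (fun e => gaussianReal (a e) 1) e).integrable_comp_of_integrable this

lemma gpi_eval_integral (a : ι → ℝ) (e : ι) : ∫ j, j e ∂(gpi a) = a e := by
  have mp := measurePreserving_eval (fun e => gaussianReal (a e) 1) e
  have h := integral_map (μ := gpi a) (φ := fun j : ι → ℝ => j e) (f := fun t : ℝ => t)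
    (measurable_pi_apply e).aemeasurable (by fun_prop)
  rw [← h]
  have h2 : (gpi a).map (fun j : ι → ℝ => j e) = gaussianReal (a e) 1 := mp.map_eq
  rw [h2, integral_id_gaussianReal]

lemma logZ_integrable (p : ι → V × V) (x : ℝ) (A : Finset ι) (a : ι → ℝ) :
    Integrable (fun j => Real.log (ZA p x A j)) (gpi a) := by
  have hb : Integrable (fun j : ι → ℝ =>
      Real.log (Fintype.card (V → Bool)) + ∑ e ∈ A, |x| * |j e|) (gpi a) := by
    refine (integrable_const _).add (integrable_finsetSum _ fun e _ => ?_)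
    exact (gpi_eval_integrable a e).abs.const_mul _
  refine hb.mono' (ZA_meas p x A).log.aestronglyMeasurable (ae_of_all _ fun j => ?_)
  have hcard : (1 : ℝ) ≤ Fintype.card (V → Bool) := by
    exact_mod_cast Fintype.card_pos
  have habs : ∀ S, |∑ e ∈ A, x * j e * sg p S e| ≤ ∑ e ∈ A, |x| * |j e| := by
    intro S
    refine (Finset.abs_sum_le_sum_abs _ _).trans (Finset.sum_le_sum fun e _ => ?_)
    have : |sg p S e| = 1 := by
      unfold sg spin
      split_ifs <;> norm_num
    rw [abs_mul, abs_mul, this, mul_one]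
  set M := ∑ e ∈ A, |x| * |j e|
  have hup : ZA p x A j ≤ Fintype.card (V → Bool) * Real.exp M := by
    unfold ZA
    refine (Finset.sum_le_card_nsmul _ _ (Real.exp M) fun S _ => ?_).trans ?_
    · exact Real.exp_le_exp.2 ((le_abs_self _).trans (habs S))
    · simp
  have hlo : Real.exp (-M) ≤ ZA p x A j := by
    refine le_trans ?_ (Finset.single_le_sum (f := fun S => bw p x A S j)
      (fun S _ => (bw_pos p x A S j).le) (Finset.mem_univ (fun _ => true)))
    exact Real.exp_le_exp.2 (neg_le_of_abs_le (habs _))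
  rw [Real.norm_eq_abs, abs_le]
  constructor
  · have := Real.log_le_log (Real.exp_pos _) hlo
    rw [Real.log_exp] at this
    have := Real.log_nonneg hcard
    linarith
  · have := Real.log_le_log (ZA_pos p x A j) hup
    rwa [Real.log_mul (by positivity) (Real.exp_pos _).ne', Real.log_exp] at this

lemma upper_aux (p : ι → V × V) (x : ℝ) (A : Finset ι) :
    ∫ j, Real.log (ZA p x Finset.univ j) ∂(gpi fun _ => x) -
      ∫ j, Real.log (ZA p x A j) ∂(gpi fun _ => x) ≤ x ^ 2 * (Aᶜ.card : ℝ) := by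
  set w : (V → Bool) → (ι → ℝ) → ℝ := fun S j => bw p x A S j / ZA p x A j with hw
  have hwm : ∀ S, Measurable (w S) := fun S => (bw_meas p x A S).div (ZA_meas p x A)
  have hw0 : ∀ S j, 0 ≤ w S j := fun S j => (div_pos (bw_pos _ _ _ _ _) (ZA_pos _ _ _ _)).le
  set R : (ι → ℝ) → ℝ := fun j =>
    ∑ S, Real.exp (∑ e ∈ Aᶜ, x * j e * (sg p S e - 1)) * w S j with hR
  have hterm : ∀ S, ∫⁻ j, ENNReal.ofReal
      (Real.exp (∑ e ∈ Aᶜ, x * j e * (sg p S e - 1)) * w S j) ∂(gpi fun _ => x) =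
      ∫⁻ j, ENNReal.ofReal (w S j) ∂(gpi fun _ => x) := by
    intro S
    have h1 := gpi_trunc A (fun e => if e ∈ A then x else x * sg p S e) (fun _ => x)
      (fun e he => by simp [he]) (fun j => ENNReal.ofReal (w S j)) (by fun_prop) (by
        intro j
        have : ∀ T, bw p x A T (fun e => if e ∈ A then j e else 0) = bw p x A T j := by
          intro T
          unfold bw
          congr 1
          refine Finset.sum_congr rfl fun e he => ?_
          simp [he]
        simp only [hw, ZA, this])
    rw [← h1, gpi_density (fun _ => x), gpi_density (fun e => if e ∈ A then x else x * sg p S e)]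
    refine lintegral_congr fun j => ?_
    rw [← ENNReal.ofReal_mul (Real.exp_pos _).le, ← ENNReal.ofReal_mul (Real.exp_pos _).le,
      ← mul_assoc, ← Real.exp_add]
    congr 3
    have h2 : ∑ e ∈ Aᶜ, x * j e * (sg p S e - 1) =
        ∑ e, if e ∈ A then 0 else x * j e * (sg p S e - 1) := by
      rw [← Finset.sum_subset (Finset.subset_univ Aᶜ)]
      · refine Finset.sum_congr rfl fun e he => ?_
        simp [Finset.mem_compl.1 he]
      · intro e _ he
        simp only [Finset.mem_compl, not_not] at he
        simp [he]
    rw [h2, ← Finset.sum_add_distrib]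
    refine Finset.sum_congr rfl fun e _ => ?_
    split_ifs
    · ring
    · linear_combination (x ^ 2 / 2) * sg_sq p S e
  have hmain := integral_le_of_ratio (gpi fun _ : ι => x)
    (fun j => Real.log (ZA p x Finset.univ j) - Real.log (ZA p x A j) - ∑ e ∈ Aᶜ, x * j e) R
    (by fun_prop)
    (fun j => Finset.sum_nonneg fun S _ => mul_nonneg (Real.exp_pos _).le (hw0 S j))
    (by
      simp only [hR]
      simp_rw [ENNReal.ofReal_sum_of_nonneg
        (fun S _ => mul_nonneg (Real.exp_pos _).le (hw0 S _))]
      rw [lintegral_finsetSum _ (fun S _ => by fun_prop), Finset.sum_congr rfl (fun S _ => hterm S),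
        ← lintegral_finsetSum _ (fun S _ => by fun_prop)]
      simp_rw [← ENNReal.ofReal_sum_of_nonneg (fun S _ => hw0 S _)]
      have : ∀ j, ∑ S, w S j = 1 := by
        intro j
        simp only [hw]
        rw [← Finset.sum_div]
        exact div_self (ZA_pos p x A j).ne'
      simp [this])
    (((logZ_integrable p x _ _).sub (logZ_integrable p x _ _)).sub
      (integrable_finsetSum _ fun e _ => (gpi_eval_integrable _ e).const_mul _))
    (by
      intro j
      have hRe : R j = ZA p x Finset.univ j / ZA p x A j / Real.exp (∑ e ∈ Aᶜ, x * j e) := by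
        simp only [hR, hw, ZA]
        rw [Finset.sum_div, Finset.sum_div]
        refine Finset.sum_congr rfl fun S _ => ?_
        have : bw p x Finset.univ S j = bw p x A S j *
            (Real.exp (∑ e ∈ Aᶜ, x * j e * (sg p S e - 1)) * Real.exp (∑ e ∈ Aᶜ, x * j e)) := by
          unfold bw
          rw [← Real.exp_add, ← Real.exp_add, ← Finset.sum_add_distrib,
            ← Finset.sum_add_sum_compl A]
          congr 2
          refine Finset.sum_congr rfl fun e _ => ?_
          ring
        rw [this]
        field_simp
      have hpos := ZA_pos p x Finset.univ j
      have hpos' := ZA_pos p x A j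
      have := Real.log_le_sub_one_of_pos (x := R j) (by rw [hRe]; positivity)
      rw [hRe, Real.log_div (by positivity) (by positivity),
        Real.log_div (by positivity) (by positivity), Real.log_exp, ← hRe] at this
      exact this)
  have hD : Integrable (fun j => Real.log (ZA p x Finset.univ j) - Real.log (ZA p x A j))
      (gpi fun _ => x) := (logZ_integrable p x _ _).sub (logZ_integrable p x _ _)
  rw [integral_sub hD
      (integrable_finsetSum _ fun e _ => (gpi_eval_integrable _ e).const_mul _),
    integral_sub (logZ_integrable p x _ _) (logZ_integrable p x _ _),
    integral_finsetSum _ fun e _ => (gpi_eval_integrable _ e).const_mul _] at hmain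
  simp only [integral_const_mul, gpi_eval_integral, Finset.sum_const, nsmul_eq_mul] at hmain
  linarith

lemma lower_aux (p : ι → V × V) (x : ℝ) (A : Finset ι) :
    x ^ 2 / 2 * (Aᶜ.card : ℝ) ≤ ∫ j, Real.log (ZA p x Finset.univ j) ∂(gpi fun _ => x) -
      ∫ j, Real.log (ZA p x A j) ∂(gpi fun _ => x) := by
  set c : ℝ := x ^ 2 / 2 * (Aᶜ.card : ℝ) with hc
  set R : (ι → ℝ) → ℝ := fun j => ZA p x A j / ZA p x Finset.univ j * Real.exp c with hR
  have hRm : Measurable R := ((ZA_meas p x A).div (ZA_meas p x _)).mul_const _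
  have hpos : ∀ B j, 0 < ZA p x B j := fun B j => ZA_pos p x B j
  have hR0 : ∀ j, 0 < R j := fun j => mul_pos (div_pos (hpos _ _) (hpos _ _)) (Real.exp_pos _)
  have hgauge : ∀ T : V → Bool, ∫⁻ j, ENNReal.ofReal (R j) ∂(gpi fun _ => x) =
      ∫⁻ j, ENNReal.ofReal (Real.exp (∑ e, (sg p T e * x * j e - (sg p T e * x) ^ 2 / 2)) * R j)
        ∂(gpi fun _ => 0) := by
    intro T
    have mp := gpi_flip (sg p T) (fun _ => x) (sg_sq p T)
    have h1 := mp.lintegral_comp (f := fun j => ENNReal.ofReal (R j)) (by fun_prop)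
    simp only [hR, ZA_flip] at h1 ⊢
    rw [h1, gpi_density]
    refine lintegral_congr fun j => ?_
    rw [← ENNReal.ofReal_mul (Real.exp_pos _).le]
  have hone : ∀ S : V → Bool, ∫⁻ j, ENNReal.ofReal
      (Real.exp (∑ e ∈ A, (x * j e * sg p S e - x ^ 2 / 2))) ∂(gpi fun _ => 0) = 1 := by
    intro S
    have h := gpi_density (fun e => if e ∈ A then sg p S e * x else 0) (fun _ => 1)
    simp only [lintegral_const, measure_univ, mul_one] at h
    rw [h]
    refine lintegral_congr fun j => ?_
    congr 2
    rw [← Finset.sum_subset (Finset.subset_univ A)]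
    · refine Finset.sum_congr rfl fun e he => ?_
      simp only [he, if_true]
      linear_combination (x ^ 2 / 2) * sg_sq p S e
    · intro e _ he
      simp [he]
  have hsum : ∀ j, ∑ T : V → Bool,
      Real.exp (∑ e, (sg p T e * x * j e - (sg p T e * x) ^ 2 / 2)) * R j =
      ∑ S : V → Bool, Real.exp (∑ e ∈ A, (x * j e * sg p S e - x ^ 2 / 2)) := by
    intro j
    have h1 : ∀ T, Real.exp (∑ e, (sg p T e * x * j e - (sg p T e * x) ^ 2 / 2)) =
        bw p x Finset.univ T j * Real.exp (-(x ^ 2 / 2 * (Fintype.card ι : ℝ))) := by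
      intro T
      unfold bw
      rw [← Real.exp_add]
      congr 1
      have : ∀ e, (sg p T e * x * j e - (sg p T e * x) ^ 2 / 2) =
          x * j e * sg p T e - x ^ 2 / 2 := fun e => by
        linear_combination (-x ^ 2 / 2) * sg_sq p T e
      simp only [this, Finset.sum_sub_distrib, Finset.sum_const, nsmul_eq_mul, Finset.card_univ]
      ring
    have h2 : ∀ S, Real.exp (∑ e ∈ A, (x * j e * sg p S e - x ^ 2 / 2)) =
        bw p x A S j * Real.exp (-(x ^ 2 / 2 * (A.card : ℝ))) := by
      intro T
      unfold bw
      rw [← Real.exp_add]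
      congr 1
      simp only [Finset.sum_sub_distrib, Finset.sum_const, nsmul_eq_mul]
      ring
    simp only [h1, h2]
    rw [← Finset.sum_mul, ← Finset.sum_mul, ← Finset.sum_mul]
    change ZA p x Finset.univ j * _ * R j = ZA p x A j * _
    have h3 : Real.exp (-(x ^ 2 / 2 * (A.card : ℝ))) =
        Real.exp (-(x ^ 2 / 2 * (Fintype.card ι : ℝ))) * Real.exp c := by
      rw [← Real.exp_add]
      congr 1
      have : (A.card : ℝ) + Aᶜ.card = Fintype.card ι := by
        exact_mod_cast Finset.card_add_card_compl A
      rw [← this, hc]; ring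
    rw [h3]
    have := (hpos Finset.univ j).ne'
    simp only [hR]
    field_simp
  have hR1 : ∫⁻ j, ENNReal.ofReal (R j) ∂(gpi fun _ => x) = 1 := by
    have h1 : ∑ T : V → Bool, ∫⁻ j, ENNReal.ofReal (R j) ∂(gpi fun _ => x) =
        ∑ S : V → Bool, 1 := by
      rw [Finset.sum_congr rfl fun T _ => hgauge T, ← Finset.sum_congr rfl fun S _ => hone S,
        ← lintegral_finsetSum _ (fun S _ => by fun_prop),
        ← lintegral_finsetSum _ (fun S _ => by fun_prop)]
      refine lintegral_congr fun j => ?_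
      rw [← ENNReal.ofReal_sum_of_nonneg (fun S _ => mul_nonneg (Real.exp_pos _).le (hR0 j).le),
        ← ENNReal.ofReal_sum_of_nonneg (fun S _ => (Real.exp_pos _).le), hsum]
    rw [Finset.sum_const, Finset.sum_const, nsmul_eq_mul, nsmul_eq_mul] at h1
    refine (ENNReal.mul_right_inj ?_ ?_).1 h1
    · simp
    · exact ENNReal.natCast_ne_top _
  have hmain := integral_le_of_ratio (gpi fun _ : ι => x)
    (fun j => Real.log (ZA p x A j) - Real.log (ZA p x Finset.univ j) + c) R
    hRm (fun j => (hR0 j).le) hR1.le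
    (((logZ_integrable p x _ _).sub (logZ_integrable p x _ _)).add (integrable_const _))
    (by
      intro j
      have := Real.log_le_sub_one_of_pos (hR0 j)
      have h2 : Real.log (R j) =
          Real.log (ZA p x A j) - Real.log (ZA p x Finset.univ j) + c := by
        simp only [hR]
        rw [Real.log_mul (div_pos (hpos _ _) (hpos _ _)).ne' (Real.exp_pos _).ne',
          Real.log_div (hpos _ _).ne' (hpos _ _).ne', Real.log_exp]
      rwa [h2] at this)
  have hD : Integrable (fun j => Real.log (ZA p x A j) - Real.log (ZA p x Finset.univ j))
      (gpi fun _ => x) := (logZ_integrable p x _ _).sub (logZ_integrable p x _ _)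
  rw [integral_add hD
      (integrable_const _),
    integral_sub (logZ_integrable p x _ _) (logZ_integrable p x _ _)] at hmain
  simp only [integral_const, probReal_univ, smul_eq_mul, one_mul] at hmain
  linarith

end model

lemma EApressure_eq {V : Type*} [Fintype V] [DecidableEq V] (E F : Finset (V × V))
    (hEF : E ⊆ F) (x : ℝ) :
    EApressure E x = ∫ j, Real.log (ZA (fun e : {e // e ∈ F} => (e : V × V)) x
      (Finset.univ.filter fun e => (e : V × V) ∈ E) j) ∂(gpi fun _ => x) := by
  have mp := gpi_precomp (fun e : {e // e ∈ E} => (⟨e.1, hEF e.2⟩ : {e // e ∈ F}))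
    (fun a b h => by
      apply Subtype.ext
      exact congrArg (fun z : {e // e ∈ F} => z.1) h) (fun _ => x)
  have h := integral_map (μ := gpi fun _ : {e // e ∈ F} => x) mp.measurable.aemeasurable
    (f := fun j => Real.log (ZA (fun e : {e // e ∈ E} => (e : V × V)) x Finset.univ j))
    (ZA_meas _ x _).log.aestronglyMeasurable
  rw [mp.map_eq] at h
  refine Eq.trans h ?_
  refine integral_congr_ae (ae_of_all _ fun j => ?_)
  simp only [ZA, bw]
  congr 1
  refine Finset.sum_congr rfl fun S _ => ?_
  congr 1
  refine Finset.sum_bij (fun e _ => (⟨e.1, hEF e.2⟩ : {e // e ∈ F})) ?_ ?_ ?_ ?_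
  · intro e _
    simp
  · intro a _ b _ h
    apply Subtype.ext
    exact congrArg (fun z : {e // e ∈ F} => z.1) h
  · intro b hb
    simp only [Finset.mem_filter, Finset.mem_univ, true_and] at hb
    exact ⟨⟨b.1, hb⟩, Finset.mem_univ _, rfl⟩
  · intro e _
    rfl

lemma EApressure_bounds {V : Type*} [Fintype V] [DecidableEq V] (E F : Finset (V × V))
    (hEF : E ⊆ F) (x : ℝ) :
    x ^ 2 / 2 * ((F \ E).card : ℝ) ≤ EApressure F x - EApressure E x ∧
      EApressure F x - EApressure E x ≤ x ^ 2 * ((F \ E).card : ℝ) := by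
  rw [EApressure_eq E F hEF, EApressure_eq F F subset_rfl]
  have h1 : (Finset.univ.filter fun e : {e // e ∈ F} => (e : V × V) ∈ F) = Finset.univ := by
    ext e; simp
  have h2 : (F \ E).card =
      (Finset.univ.filter fun e : {e // e ∈ F} => (e : V × V) ∈ E)ᶜ.card := by
    rw [← Finset.card_map (Function.Embedding.subtype _)]
    congr 1
    ext e
    simp [and_comm]
  rw [h1, h2]
  exact ⟨lower_aux _ x _, upper_aux _ x _⟩

lemma cube_subset_torus (d L : ℕ) : cubeBonds d L ⊆ torusBonds d L := by
  intro p hp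
  simp only [cubeBonds, torusBonds, Finset.mem_filter, Finset.mem_univ, true_and] at hp ⊢
  obtain ⟨i, h1, h2⟩ := hp
  refine ⟨i, h1, ?_⟩
  rw [← h2, Nat.mod_eq_of_lt (p.2 i).2]

lemma cut_card (d L : ℕ) (hL : 2 ≤ L) :
    (torusBonds d L \ cubeBonds d L).card = d * L ^ (d - 1) := by
  have hL0 : 0 < L := by omega
  set z : Fin L := ⟨0, hL0⟩ with hz
  set l : Fin L := ⟨L - 1, by omega⟩ with hl
  have hzl : z ≠ l := by
    intro h
    have := congrArg Fin.val h
    simp only [hz, hl] at this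
    omega
  set B : Fin d → Finset (Fin d → Fin L) := fun i => Finset.univ.filter fun n => n i = l with hB
  have hBc : ∀ i, (B i).card = L ^ (d - 1) := by
    intro i
    have : B i = Fintype.piFinset fun k => if k = i then {l} else Finset.univ := by
      ext n
      simp only [hB, Finset.mem_filter, Finset.mem_univ, true_and, Fintype.mem_piFinset]
      constructor
      · intro h k
        split_ifs with hk
        · subst hk; simpa using h
        · simp
      · intro h
        simpa using h i
    rw [this, Fintype.card_piFinset, ← Finset.mul_prod_erase _ _ (Finset.mem_univ i)]
    rw [Finset.prod_congr rfl (g := fun _ => L)]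
    · simp [Finset.card_erase_of_mem]
    · intro k hk
      simp [(Finset.mem_erase.1 hk).1]
  have hset : torusBonds d L \ cubeBonds d L = Finset.univ.biUnion fun i =>
      (B i).image fun n => (n, Function.update n i z) := by
    ext ⟨n, m⟩
    simp only [torusBonds, cubeBonds, Finset.mem_sdiff, Finset.mem_filter, Finset.mem_univ,
      true_and, Finset.mem_biUnion, Finset.mem_image, hB, Prod.mk.injEq]
    constructor
    · rintro ⟨⟨i, h1, h2⟩, h3⟩
      have hni : (n i : ℕ) = L - 1 := by
        by_contra hne
        have := (n i).2
        rw [Nat.mod_eq_of_lt (by omega)] at h2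
        exact h3 ⟨i, h1, h2⟩
      refine ⟨i, n, Fin.ext hni, rfl, ?_⟩
      funext k
      by_cases hk : k = i
      · subst hk
        rw [Function.update_self]
        apply Fin.ext
        rw [h2, hni, Nat.sub_add_cancel (by omega), Nat.mod_self]
      · rw [Function.update_of_ne hk, h1 k hk]
    · rintro ⟨i, n', h1, rfl, rfl⟩
      have hv : (n' i : ℕ) = L - 1 := congrArg Fin.val h1
      refine ⟨⟨i, fun k hk => Function.update_of_ne hk _ _, ?_⟩, ?_⟩
      · rw [Function.update_self, hv, Nat.sub_add_cancel (by omega), Nat.mod_self]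
      · rintro ⟨k, h2, h3⟩
        by_cases hk : k = i
        · subst hk
          rw [Function.update_self] at h3
          simp only [hz] at h3
          omega
        · have := h2 i (Ne.symm hk)
          rw [Function.update_self, h1] at this
          exact hzl this
  rw [hset, Finset.card_biUnion]
  · rw [Finset.sum_congr rfl (g := fun _ => L ^ (d - 1))]
    · simp
    · intro i _
      rw [Finset.card_image_of_injective _ (fun a b h => (Prod.mk.inj h).1), hBc]
  · intro i _ k _ hik
    rw [Function.onFun, Finset.disjoint_left]
    intro q hq hq'
    simp only [Finset.mem_image, hB, Finset.mem_filter, Finset.mem_univ, true_and] at hq hq'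
    obtain ⟨n, hn, rfl⟩ := hq
    obtain ⟨n', hn', h⟩ := hq'
    obtain ⟨h1, h2⟩ := Prod.mk.inj h
    subst h1
    have := congrFun h2 i
    rw [Function.update_self, Function.update_of_ne hik, hn] at this
    exact hzl this.symm

/-- **Theorem 2.** Surface-order bounds for the periodic–free pressure
difference: for `d ≥ 1`, `x > 0` and `L ≥ 2`,
`(x²/2) d L^{d−1} ≤ P_{Π_L} − P_{Λ_L} ≤ x² d L^{d−1}`. -/
theorem periodic_free_pressure_difference_surface_bounds
    (d : ℕ) (hd : 1 ≤ d) (x : ℝ) (hx : 0 < x) (L : ℕ) (hL : 2 ≤ L) :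
    x ^ 2 / 2 * ((d : ℝ) * (L : ℝ) ^ (d - 1)) ≤
        EApressure (torusBonds d L) x - EApressure (cubeBonds d L) x ∧
      EApressure (torusBonds d L) x - EApressure (cubeBonds d L) x ≤
        x ^ 2 * ((d : ℝ) * (L : ℝ) ^ (d - 1)) := by
  have h := EApressure_bounds (cubeBonds d L) (torusBonds d L) (cube_subset_torus d L) x
  rw [cut_card d L hL] at h
  push_cast at h
  exact h

end
end

section
/- Superadditivity of the quenched pressure under disjoint decomposition: let Λ be a finite set of sites decomposed as a disjoint union Λ = ∪_i Λ_i, let B be a bond set on Λ, and let C ⊆ B be the corridor, i.e. the set of bonds of B joining sites lying in different pieces Λ_i, so that B ∖ C = ∪_i B_i where B_i is the set of bonds of B internal to Λ_i. Then for any x > 0 (all parameters equal to x), P_B ≥ Σ_i P_{B_i}, where P_{B_i} is the quenched pressure of the subsystem (Λ_i, B_i); moreover P_B − Σ_i P_{B_i} ≤ x² |C|. -/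
open MeasureTheory ProbabilityTheory Filter

noncomputable section

/-- The bond set of the subsystem `Λ_i = π⁻¹(i)` of a decomposition `π : V → κ`:
the bonds of `B` both of whose endpoints lie in `Λ_i`. -/
def subBonds {V κ : Type*} [Fintype V] [DecidableEq V] [DecidableEq κ]
    (π : V → κ) (B : Finset (V × V)) (i : κ) :
    Finset ({v // π v = i} × {v // π v = i}) :=
  Finset.univ.filter fun p => ((p.1 : V), (p.2 : V)) ∈ B

lemma spin_sq_abs (s t : Bool) : |spin s * spin t| ≤ 1 := by
  cases s <;> cases t <;> simp [spin]

lemma spin_cases (s t : Bool) : spin s * spin t = 1 ∨ spin s * spin t = -1 := by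
  cases s <;> cases t <;> simp [spin]

/-- Product gaussian measure. -/
def gm (ι : Type*) [Fintype ι] (x : ℝ) : Measure (ι → ℝ) :=
  Measure.pi fun _ : ι => gaussianReal x 1

instance gm_prob (ι : Type*) [Fintype ι] (x : ℝ) : IsProbabilityMeasure (gm ι x) := by
  unfold gm; infer_instance

lemma gm_iIndep (ι : Type*) [Fintype ι] (x : ℝ) :
    iIndepFun (fun (i : ι) (j : ι → ℝ) => j i) (gm ι x) :=
  iIndepFun_pi (μ := fun _ : ι => gaussianReal x 1) (X := fun _ y => y)
    (fun _ => aemeasurable_id)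

lemma gm_map {ι α : Type*} [Fintype ι] [Fintype α] (x : ℝ) (φ : α → ι)
    (hφ : Function.Injective φ) :
    (gm ι x).map (fun j a => j (φ a)) = gm α x := by
  have h := (gm_iIndep ι x).precomp hφ
  have h2 := (iIndepFun_iff_map_fun_eq_pi_map (fun a => by
    exact (measurable_pi_apply (φ a)).aemeasurable)).1 h
  rw [gm]
  rw [gm] at h2
  rw [h2, gm]
  congr 1
  ext1 a
  exact (measurePreserving_eval (fun _ : ι => gaussianReal x 1) (φ a)).map_eq

lemma EApressure_eq_s19 {V : Type*} [Fintype V] [DecidableEq V] (E : Finset (V × V)) (x : ℝ)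
    {ι : Type*} [Fintype ι] (φ : {e // e ∈ E} → ι) (hφ : Function.Injective φ) :
    EApressure E x = ∫ j : ι → ℝ, Real.log (∑ S : V → Bool,
      Real.exp (∑ e : {e // e ∈ E},
        x * j (φ e) * (spin (S (e : V × V).1) * spin (S (e : V × V).2)))) ∂(gm ι x) := by
  have h := gm_map x φ hφ
  unfold EApressure
  change ∫ j, _ ∂(gm _ x) = _
  rw [← h, integral_map]
  · exact (measurable_pi_lambda _ fun a => measurable_pi_apply (φ a)).aemeasurable
  · apply Measurable.aestronglyMeasurable
    fun_prop

lemma coord_integrable {ι : Type*} [Fintype ι] (x : ℝ) (i : ι) :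
    Integrable (fun j : ι → ℝ => j i) (gm ι x) :=
  integrable_comp_eval (μ := fun _ : ι => gaussianReal x 1) (f := fun y => y)
    (by
      have := (memLp_id_gaussianReal (μ := x) (v := 1) 1)
      exact memLp_one_iff_integrable.1 (by rw [ENNReal.coe_one] at this; exact this))

lemma coord_integral {ι : Type*} [Fintype ι] (x : ℝ) (i : ι) :
    ∫ j : ι → ℝ, j i ∂(gm ι x) = x := by
  have := integral_comp_eval (μ := fun _ : ι => gaussianReal x 1) (i := i) (f := fun y : ℝ => y)
    aestronglyMeasurable_id
  rw [gm, this, integral_id_gaussianReal]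

lemma logZ_integrable_s19 {ι α T : Type*} [Fintype ι] [Fintype α] [Fintype T] [Nonempty T]
    (x : ℝ) (φ : α → ι) (c : T → α → ℝ) (hc : ∀ t a, |c t a| ≤ 1) :
    Integrable (fun j : ι → ℝ =>
      Real.log (∑ t, Real.exp (∑ a, x * j (φ a) * c t a))) (gm ι x) := by
  have hb : Integrable (fun j : ι → ℝ =>
      Real.log (Fintype.card T) + ∑ a, |x * j (φ a)|) (gm ι x) := by
    refine (integrable_const _).add (integrable_finsetSum _ fun a _ => ?_)
    exact ((coord_integrable x (φ a)).const_mul x).abs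
  refine hb.mono' ?_ (ae_of_all _ fun j => ?_)
  · apply Measurable.aestronglyMeasurable
    fun_prop
  have hbd : ∀ t, |∑ a, x * j (φ a) * c t a| ≤ ∑ a, |x * j (φ a)| := fun t => by
    refine (Finset.abs_sum_le_sum_abs _ _).trans (Finset.sum_le_sum fun a _ => ?_)
    rw [abs_mul]
    exact mul_le_of_le_one_right (abs_nonneg _) (hc t a)
  set M := ∑ a, |x * j (φ a)|
  have hpos : 0 < ∑ t, Real.exp (∑ a, x * j (φ a) * c t a) :=
    Finset.sum_pos (fun t _ => Real.exp_pos _) Finset.univ_nonempty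
  have hcard : (1 : ℝ) ≤ Fintype.card T := by exact_mod_cast Fintype.card_pos
  have hl : 0 ≤ Real.log (Fintype.card T) := Real.log_nonneg hcard
  rw [Real.norm_eq_abs, abs_le]
  constructor
  · obtain ⟨t⟩ := ‹Nonempty T›
    have h1 : Real.exp (-M) ≤ ∑ t, Real.exp (∑ a, x * j (φ a) * c t a) := by
      refine le_trans (Real.exp_le_exp.2 (abs_le.1 (hbd t)).1) ?_
      exact Finset.single_le_sum (f := fun t => Real.exp (∑ a, x * j (φ a) * c t a))
        (fun t _ => (Real.exp_pos _).le) (Finset.mem_univ t)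
    have := (Real.le_log_iff_exp_le hpos).2 h1
    linarith
  · rw [Real.log_le_iff_le_exp hpos, Real.exp_add, Real.exp_log (by linarith)]
    refine (Finset.sum_le_card_nsmul _ _ (Real.exp M) fun t _ =>
      Real.exp_le_exp.2 (abs_le.1 (hbd t)).2).trans ?_
    simp

lemma gauss_exp (x : ℝ) (s : ℝ) (hs : s = 1 ∨ s = -1) :
    Integrable (fun y => Real.exp (x * y * (s - 1))) (gaussianReal x 1) ∧
    ∫ y, Real.exp (x * y * (s - 1)) ∂(gaussianReal x 1) = 1 := by
  rcases hs with rfl | rfl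
  · simp
  · have e : ∀ y : ℝ, x * y * (-1 - 1) = (-2 * x) * y := fun y => by ring
    simp only [e]
    refine ⟨integrable_exp_mul_gaussianReal _, ?_⟩
    have := mgf_gaussianReal (p := gaussianReal x 1) (X := id) (μ := x) (v := 1) (by simp) (-2 * x)
    simp only [mgf, id] at this
    rw [this, Real.exp_eq_one_iff]
    push_cast
    ring

lemma corridor_exp {ι : Type*} [Fintype ι] [DecidableEq ι] (x : ℝ) (C : Finset ι) (s : ι → ℝ)
    (hs : ∀ i, s i = 1 ∨ s i = -1) :
    Integrable (fun j : ι → ℝ => Real.exp (∑ e ∈ C, x * j e * (s e - 1))) (gm ι x) ∧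
    ∫ j : ι → ℝ, Real.exp (∑ e ∈ C, x * j e * (s e - 1)) ∂(gm ι x) = 1 := by
  have e : ∀ j : ι → ℝ, Real.exp (∑ e ∈ C, x * j e * (s e - 1)) =
      ∏ i, (fun (i : ι) (y : ℝ) => if i ∈ C then Real.exp (x * y * (s i - 1)) else 1) i (j i) := by
    intro j
    rw [Real.exp_sum]
    simp [Finset.prod_ite_mem]
  simp only [e]
  constructor
  · apply Integrable.fintype_prod
      (f := fun (i : ι) (y : ℝ) => if i ∈ C then Real.exp (x * y * (s i - 1)) else 1)
    intro i
    by_cases h : i ∈ C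
    · simpa [h] using (gauss_exp x (s i) (hs i)).1
    · simp [h]
  · rw [gm, integral_fintype_prod_eq_prod
      (f := fun (i : ι) (y : ℝ) => if i ∈ C then Real.exp (x * y * (s i - 1)) else 1)]
    refine Finset.prod_eq_one fun i _ => ?_
    by_cases h : i ∈ C
    · simpa [h] using (gauss_exp x (s i) (hs i)).2
    · simp [h]

/-- A bounded function of the couplings in `D` times the corridor factor. -/
lemma indep_exp {ι : Type*} [Fintype ι] [DecidableEq ι] (x : ℝ) (C D : Finset ι)
    (hCD : Disjoint D C) (s : ι → ℝ) (hs : ∀ i, s i = 1 ∨ s i = -1)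
    (w : (D → ℝ) → ℝ) (hw : Measurable w) (hw1 : ∀ j, |w j| ≤ 1) :
    Integrable (fun j : ι → ℝ => w (fun d => j d) *
      Real.exp (∑ e ∈ C, x * j e * (s e - 1))) (gm ι x) ∧
    ∫ j : ι → ℝ, w (fun d => j d) *
      Real.exp (∑ e ∈ C, x * j e * (s e - 1)) ∂(gm ι x) = ∫ j, w (fun d => j d) ∂(gm ι x) := by
  have hi := (gm_iIndep ι x).indepFun_finset D C hCD (fun i => measurable_pi_apply i)
  have hg : Measurable (fun k : C → ℝ => Real.exp (∑ e : C, x * k e * (s e - 1))) := by fun_prop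
  have hi2 := hi.comp hw hg
  obtain ⟨h1, h2⟩ := corridor_exp x C s hs
  have e : ∀ j : ι → ℝ, ∑ e : C, x * j e * (s e - 1) = ∑ e ∈ C, x * j e * (s e - 1) :=
    fun j => Finset.sum_coe_sort C (fun e => x * j e * (s e - 1))
  simp only [Function.comp_def, e] at hi2
  have hwm : Measurable (fun j : ι → ℝ => w (fun d => j d)) := by fun_prop
  have hwi : Integrable (fun j : ι → ℝ => w (fun d => j d)) (gm ι x) :=
    (integrable_const (1 : ℝ)).mono' hwm.aestronglyMeasurable (ae_of_all _ fun j => hw1 _)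
  refine ⟨hi2.integrable_mul hwi h1, ?_⟩
  rw [hi2.integral_fun_mul_eq_mul_integral hwi.1 h1.1, h2, mul_one]

/-- Interaction of the bonds of `E`. -/
def ham {V : Type*} (E : Finset (V × V)) (x : ℝ) (j : V × V → ℝ) (S : V → Bool) : ℝ :=
  ∑ e ∈ E, x * j e * (spin (S e.1) * spin (S e.2))

lemma flip_zero {V κ : Type*} [Fintype V] [DecidableEq V] [DecidableEq κ] (π : V → κ)
    (B : Finset (V × V)) (x : ℝ) (j : V × V → ℝ) (b : V × V) (hb : π b.1 ≠ π b.2) :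
    ∑ S : V → Bool, Real.exp (ham (B.filter fun p => π p.1 = π p.2) x j S) *
      (spin (S b.1) * spin (S b.2)) = 0 := by
  let τ : (V → Bool) → (V → Bool) := fun S v => if π v = π b.1 then !S v else S v
  have hτ : Function.Involutive τ := fun S => by
    funext v
    by_cases h : π v = π b.1 <;> simp [τ, h]
  have hn : ∀ a : Bool, spin (!a) = - spin a := fun a => by cases a <;> simp [spin]
  have hH : ∀ S, ham (B.filter fun p => π p.1 = π p.2) x j (τ S) =
      ham (B.filter fun p => π p.1 = π p.2) x j S := fun S => by
    refine Finset.sum_congr rfl fun e he => ?_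
    have he := (Finset.mem_filter.1 he).2
    by_cases h : π e.2 = π b.1
    · simp [τ, he, h, hn]
    · simp [τ, he, h]
  have hs : ∀ S, spin (τ S b.1) * spin (τ S b.2) = -(spin (S b.1) * spin (S b.2)) := fun S => by
    simp [τ, Ne.symm hb, hn]
  have := Equiv.sum_comp (hτ.toPerm τ) (fun S : V → Bool =>
    Real.exp (ham (B.filter fun p => π p.1 = π p.2) x j S) * (spin (S b.1) * spin (S b.2)))
  simp only [Function.Involutive.coe_toPerm, hH, hs, mul_neg, Finset.sum_neg_distrib] at this
  linarith

lemma ham_split {V κ : Type*} [DecidableEq κ] (π : V → κ)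
    (B : Finset (V × V)) (x : ℝ) (j : V × V → ℝ) (S : V → Bool) :
    ham B x j S = ham (B.filter fun p => π p.1 = π p.2) x j S +
      ham (B.filter fun p => π p.1 ≠ π p.2) x j S := by
  unfold ham
  rw [Finset.sum_filter_add_sum_filter_not]

lemma ham_pieces {V κ : Type*} [Fintype V] [DecidableEq V] [Fintype κ] [DecidableEq κ] (π : V → κ)
    (B : Finset (V × V)) (x : ℝ) (j : V × V → ℝ) (S : V → Bool) :
    ham (B.filter fun p => π p.1 = π p.2) x j S =
      ∑ i : κ, ∑ e : {e // e ∈ subBonds π B i}, x * j (e.1.1.1, e.1.2.1) *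
        (spin (S e.1.1) * spin (S e.1.2)) := by
  unfold ham
  rw [← Finset.sum_fiberwise _ (fun e : V × V => π e.1)]
  refine Finset.sum_congr rfl fun i _ => ?_
  rw [Finset.sum_coe_sort (subBonds π B i) (fun e => x * j (e.1.1, e.2.1) *
        (spin (S e.1) * spin (S e.2)))]
  symm
  refine Finset.sum_bij (fun e _ => (e.1.1, e.2.1)) ?_ ?_ ?_ ?_
  · rintro ⟨⟨a, ha⟩, ⟨b, hb⟩⟩ h
    simp only [subBonds, Finset.mem_filter, Finset.mem_univ, true_and] at h ⊢
    exact ⟨⟨h, ha.trans hb.symm⟩, ha⟩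
  · rintro ⟨⟨a, ha⟩, ⟨b, hb⟩⟩ _ ⟨⟨a', ha'⟩, ⟨b', hb'⟩⟩ _ h
    simpa using h
  · rintro ⟨a, b⟩ h
    simp only [Finset.mem_filter] at h
    obtain ⟨⟨h1, h2⟩, h3⟩ := h
    exact ⟨(⟨a, h3⟩, ⟨b, h2.symm.trans h3⟩), by simpa [subBonds] using h1, rfl⟩
  · intros; rfl

/-- Gluing spin configurations on the pieces. -/
def glue {V κ : Type*} (π : V → κ) : (V → Bool) ≃ ((i : κ) → {v // π v = i} → Bool) where
  toFun S := fun _ v => S v.1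
  invFun T := fun v => T (π v) ⟨v, rfl⟩
  left_inv S := rfl
  right_inv T := by
    funext i ⟨v, hv⟩
    subst hv
    rfl

lemma prod_Z {V κ : Type*} [Fintype V] [DecidableEq V] [Fintype κ] [DecidableEq κ] (π : V → κ)
    (B : Finset (V × V)) (x : ℝ) (j : V × V → ℝ) :
    ∑ S, Real.exp (ham (B.filter fun p => π p.1 = π p.2) x j S) =
      ∏ i : κ, ∑ T : {v // π v = i} → Bool, Real.exp (∑ e : {e // e ∈ subBonds π B i},
        x * j (e.1.1.1, e.1.2.1) * (spin (T e.1.1) * spin (T e.1.2))) := by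
  rw [Finset.prod_univ_sum, Fintype.piFinset_univ]
  refine Fintype.sum_equiv (glue π) _ _ fun S => ?_
  rw [ham_pieces, Real.exp_sum]
  rfl

/-- Superadditivity of the quenched pressure under disjoint
decomposition: for a finite site set `V` decomposed into the disjoint pieces
`Λ_i = π⁻¹(i)`, `i ∈ κ`, a bond set `B` on `V`, and the corridor
`C = {b ∈ B | the endpoints of b lie in different pieces}`, one has (all parameters equal
to `x > 0`) `P_B ≥ Σ_i P_{B_i}` where `B_i` is the set of bonds of `B` internal to `Λ_i`,
and moreover `P_B − Σ_i P_{B_i} ≤ x² |C|`. -/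
theorem pressure_superadditive_decomposition
    {V κ : Type*} [Fintype V] [DecidableEq V] [Fintype κ] [DecidableEq κ]
    (π : V → κ) (B : Finset (V × V)) (hB : ∀ p ∈ B, p.1 ≠ p.2) (x : ℝ) (hx : 0 < x) :
    (∑ i : κ, EApressure (subBonds π B i) x) ≤ EApressure B x ∧
      EApressure B x - (∑ i : κ, EApressure (subBonds π B i) x) ≤
        x ^ 2 * ((B.filter fun p => π p.1 ≠ π p.2).card : ℝ) := by
  set B0 := B.filter fun p => π p.1 = π p.2 with hB0
  set C := B.filter fun p => π p.1 ≠ π p.2 with hC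
  have hPB : EApressure B x = ∫ j, Real.log (∑ S, Real.exp (ham B x j S)) ∂(gm (V × V) x) := by
    rw [EApressure_eq_s19 B x (fun e => e.1) Subtype.val_injective]
    refine integral_congr_ae (ae_of_all _ fun j => ?_)
    simp only [ham]
    congr 1
    refine Finset.sum_congr rfl fun S _ => ?_
    rw [Finset.sum_coe_sort B (fun e => x * j e * (spin (S e.1) * spin (S e.2)))]
  have hIB : Integrable (fun j => Real.log (∑ S, Real.exp (ham B x j S))) (gm (V × V) x) := by
    have := logZ_integrable_s19 (ι := V × V) (α := {e // e ∈ B}) (T := V → Bool) x (fun e => e.1)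
      (fun S e => spin (S e.1.1) * spin (S e.1.2)) (fun _ _ => spin_sq_abs _ _)
    refine this.congr (ae_of_all _ fun j => ?_)
    simp only [ham]
    congr 1
    refine Finset.sum_congr rfl fun S _ => ?_
    rw [Finset.sum_coe_sort B (fun e => x * j e * (spin (S e.1) * spin (S e.2)))]
  have hIi : ∀ i : κ, Integrable (fun j : V × V → ℝ => Real.log
      (∑ T : {v // π v = i} → Bool, Real.exp (∑ e : {e // e ∈ subBonds π B i},
        x * j (e.1.1.1, e.1.2.1) * (spin (T e.1.1) * spin (T e.1.2))))) (gm (V × V) x) := fun i =>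
    logZ_integrable_s19 (ι := V × V) (α := {e // e ∈ subBonds π B i}) (T := {v // π v = i} → Bool) x
      (fun e => (e.1.1.1, e.1.2.1))
      (fun S e => spin (S e.1.1) * spin (S e.1.2)) (fun _ _ => spin_sq_abs _ _)
  have hlog : ∀ j : V × V → ℝ, Real.log (∑ S, Real.exp (ham B0 x j S)) = ∑ i : κ, Real.log
      (∑ T : {v // π v = i} → Bool, Real.exp (∑ e : {e // e ∈ subBonds π B i},
        x * j (e.1.1.1, e.1.2.1) * (spin (T e.1.1) * spin (T e.1.2)))) := fun j => by
    rw [prod_Z, Real.log_prod]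
    intro i _
    exact (Finset.sum_pos (fun t _ => Real.exp_pos _) Finset.univ_nonempty).ne'
  have hI0 : Integrable (fun j => Real.log (∑ S, Real.exp (ham B0 x j S))) (gm (V × V) x) := by
    simp only [hlog]
    exact integrable_finsetSum _ fun i _ => hIi i
  have hP0 : ∑ i : κ, EApressure (subBonds π B i) x =
      ∫ j, Real.log (∑ S, Real.exp (ham B0 x j S)) ∂(gm (V × V) x) := by
    simp only [hlog]
    rw [integral_finsetSum _ fun i _ => hIi i]
    refine Finset.sum_congr rfl fun i _ => ?_
    have hinj : Function.Injective (fun e : {e // e ∈ subBonds π B i} =>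
        ((e.1.1.1, e.1.2.1) : V × V)) := ?_
    · exact EApressure_eq_s19 (subBonds π B i) x (fun e => ((e.1.1.1, e.1.2.1) : V × V)) hinj
    rintro ⟨⟨⟨a, ha⟩, ⟨b, hb⟩⟩, h⟩ ⟨⟨⟨a', ha'⟩, ⟨b', hb'⟩⟩, h'⟩ hh
    simpa using hh
  have hZ0 : ∀ j, 0 < ∑ S, Real.exp (ham B0 x j S) := fun j =>
    Finset.sum_pos (fun t _ => Real.exp_pos _) Finset.univ_nonempty
  have hZB : ∀ j, 0 < ∑ S, Real.exp (ham B x j S) := fun j =>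
    Finset.sum_pos (fun t _ => Real.exp_pos _) Finset.univ_nonempty
  rw [hPB, hP0]
  constructor
  · refine integral_mono hI0 hIB fun j => ?_
    refine Real.log_le_log (hZ0 j) ?_
    have hW : ∑ S, Real.exp (ham B0 x j S) * ham C x j S = 0 := by
      simp only [ham, Finset.mul_sum]
      rw [Finset.sum_comm]
      refine Finset.sum_eq_zero fun b hb => ?_
      have := flip_zero π B x j b (Finset.mem_filter.1 hb).2
      have h2 := congrArg (fun y => x * j b * y) this
      simp only [Finset.mul_sum, mul_zero, ham] at h2
      rw [← h2]
      exact Finset.sum_congr rfl fun S _ => by ring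
    calc ∑ S, Real.exp (ham B0 x j S)
        = ∑ S, Real.exp (ham B0 x j S) * (ham C x j S + 1) := by
          simp only [mul_add, mul_one, Finset.sum_add_distrib, hW, zero_add]
      _ ≤ ∑ S, Real.exp (ham B x j S) := by
          refine Finset.sum_le_sum fun S _ => ?_
          rw [ham_split π B, Real.exp_add]
          exact mul_le_mul_of_nonneg_left (Real.add_one_le_exp _) (Real.exp_pos _).le
  · let w : (V → Bool) → (B0 → ℝ) → ℝ := fun S k =>
      Real.exp (∑ e : B0, x * k e * (spin (S e.1.1) * spin (S e.1.2))) /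
        ∑ S' : V → Bool, Real.exp (∑ e : B0, x * k e * (spin (S' e.1.1) * spin (S' e.1.2)))
    have hw : ∀ S j, w S (fun d => j d) =
        Real.exp (ham B0 x j S) / ∑ S', Real.exp (ham B0 x j S') := fun S j => by
      have e : ∀ S : V → Bool, ∑ e : B0, x * j e * (spin (S e.1.1) * spin (S e.1.2)) =
          ham B0 x j S := fun S =>
        Finset.sum_coe_sort B0 (fun e => x * j e * (spin (S e.1) * spin (S e.2)))
      simp only [w, e]
    have hwm : ∀ S, Measurable (w S) := fun S => by
      simp only [w]
      fun_prop
    have hw1 : ∀ S k, |w S k| ≤ 1 := fun S k => by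
      have hp : 0 < ∑ S' : V → Bool,
          Real.exp (∑ e : B0, x * k e * (spin (S' e.1.1) * spin (S' e.1.2))) :=
        Finset.sum_pos (fun t _ => Real.exp_pos _) Finset.univ_nonempty
      simp only [w]
      rw [abs_of_nonneg (by positivity), div_le_one hp]
      exact Finset.single_le_sum (f := fun S' : V → Bool =>
        Real.exp (∑ e : B0, x * k e * (spin (S' e.1.1) * spin (S' e.1.2))))
        (fun t _ => (Real.exp_pos _).le) (Finset.mem_univ S)
    have hdis : Disjoint B0 C := Finset.disjoint_filter_filter_not B B _
    have key := fun S : V → Bool => indep_exp x C B0 hdis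
      (fun e => spin (S e.1) * spin (S e.2)) (fun _ => spin_cases _ _) (w S) (hwm S) (hw1 S)
    have hwI : ∀ S, Integrable (fun j : V × V → ℝ => w S (fun d => j d)) (gm (V × V) x) := by
      intro S
      have := hwm S
      exact (integrable_const (1 : ℝ)).mono' (by
        apply Measurable.aestronglyMeasurable
        fun_prop) (ae_of_all _ fun j => hw1 S _)
    have hU : Integrable (fun j : V × V → ℝ => ∑ e ∈ C, x * j e) (gm (V × V) x) :=
      integrable_finsetSum _ fun e _ => (coord_integrable x e).const_mul x
    have hR : Integrable (fun j : V × V → ℝ => ∑ S : V → Bool, w S (fun d => j d) *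
      Real.exp (∑ e ∈ C, x * j e * (spin (S e.1) * spin (S e.2) - 1))) (gm (V × V) x) :=
      integrable_finsetSum _ fun S _ => (key S).1
    have hRi : ∫ j : V × V → ℝ, ∑ S : V → Bool, w S (fun d => j d) *
      Real.exp (∑ e ∈ C, x * j e * (spin (S e.1) * spin (S e.2) - 1)) ∂(gm (V × V) x) = 1 := by
      rw [integral_finsetSum _ fun S _ => (key S).1]
      simp only [fun S => (key S).2]
      rw [← integral_finsetSum _ fun S _ => hwI S]
      simp only [hw, ← Finset.sum_div]
      simp [fun j => div_self (hZ0 j).ne']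
    have hUi : ∫ j : V × V → ℝ, ∑ e ∈ C, x * j e ∂(gm (V × V) x) = x ^ 2 * (C.card : ℝ) := by
      rw [integral_finsetSum _ fun e _ => (coord_integrable x e).const_mul x]
      simp only [integral_const_mul, coord_integral]
      simp
      ring
    rw [← integral_sub hIB hI0, ← hUi]
    have hfin : ∫ j : V × V → ℝ, ((∑ e ∈ C, x * j e) + ((∑ S : V → Bool, w S (fun d => j d) *
      Real.exp (∑ e ∈ C, x * j e * (spin (S e.1) * spin (S e.2) - 1))) - 1)) ∂(gm (V × V) x) =
        ∫ j : V × V → ℝ, ∑ e ∈ C, x * j e ∂(gm (V × V) x) := by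
      have h1 := integral_sub hR (integrable_const (μ := gm (V × V) x) (1 : ℝ))
      have h2 := integral_add hU (hR.sub (integrable_const (μ := gm (V × V) x) (1 : ℝ)))
      refine h2.trans ?_
      have h3 : ∫ _ : V × V → ℝ, (1 : ℝ) ∂(gm (V × V) x) = 1 := by simp
      rw [hRi, h3, sub_self] at h1
      refine (congrArg₂ (· + ·) rfl h1).trans (add_zero _)
    rw [← hfin]
    refine integral_mono (hIB.sub hI0) (hU.add (hR.sub (integrable_const 1))) fun j => ?_
    have hsum : ∑ S : V → Bool, w S (fun d => j d) *
        Real.exp (∑ e ∈ C, x * j e * (spin (S e.1) * spin (S e.2) - 1)) =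
        (∑ S, Real.exp (ham B x j S)) / (∑ S, Real.exp (ham B0 x j S)) *
          Real.exp (-∑ e ∈ C, x * j e) := by
      rw [Finset.sum_div, Finset.sum_mul]
      refine Finset.sum_congr rfl fun S _ => ?_
      have e1 : ∑ e ∈ C, x * j e * (spin (S e.1) * spin (S e.2) - 1) =
          ham C x j S + -∑ e ∈ C, x * j e := by
        simp only [ham, mul_sub, mul_one, Finset.sum_sub_distrib]
        ring
      rw [hw, e1, ham_split π B, Real.exp_add, Real.exp_add]
      ring
    have hlg := Real.log_le_sub_one_of_pos (mul_pos (div_pos (hZB j) (hZ0 j))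
      (Real.exp_pos (-∑ e ∈ C, x * j e)))
    rw [Real.log_mul (div_pos (hZB j) (hZ0 j)).ne' (Real.exp_pos _).ne', Real.log_exp,
      Real.log_div (hZB j).ne' (hZ0 j).ne', ← hsum] at hlg
    change Real.log _ - Real.log _ ≤ (∑ e ∈ C, x * j e) + (_ - 1)
    linarith

end
end
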